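/- arXiv:2310.18612 — 3 statements merged into one kernel-verified Lean document; each statement's English description precedes it below -/
import Mathlib

section
/- Under the one-dimensional grid setup, if g : [a,b] → ℝ is monotonic on every subinterval [x_i, x_{i+1}] for 0 ≤ i ≤ N−1, then ‖g‖₁ ≤ √2 ‖g‖₀. -/
/-- The discrete trapezoidal-rule grid norm on `[a,b]` with `n` uniform subintervals. -/
noncomputable def gridNorm (a b : ℝ) (n : ℕ) (g : ℝ → ℝ) : ℝ :=
  Real.sqrt (((b - a) / n / 2) *
    ∑ j ∈ Finset.range n,
      ((g (a + j * ((b - a) / n))) ^ 2 + (g (a + (j + 1) * ((b - a) / n))) ^ 2))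

/-- A block-wise bound on the terms of a sum over `range (τ * N)` bounds the sum. -/
lemma sum_range_mul_le_of_block_le (f c : ℕ → ℝ) (τ N : ℕ)
    (h : ∀ i < N, ∀ k < τ, f (τ * i + k) ≤ c i) :
    ∑ j ∈ Finset.range (τ * N), f j ≤ τ * ∑ i ∈ Finset.range N, c i := by
  induction N with
  | zero => simp
  | succ n ih =>
    rw [Nat.mul_succ, Finset.sum_range_add, Finset.sum_range_succ, mul_add]
    refine add_le_add (ih fun i hi => h i (by omega)) ?_
    simpa using Finset.sum_le_card_nsmul (Finset.range τ) _ (c n)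
      fun k hk => h n n.lt_succ_self k (Finset.mem_range.mp hk)

/-- The square of a monotone or antitone function on `[u, v]` is bounded by the sum of the squares
of its endpoint values. -/
lemma sq_le_sq_add_sq_of_monotoneOn_or_antitoneOn {g : ℝ → ℝ} {u v y : ℝ}
    (h : MonotoneOn g (Set.Icc u v) ∨ AntitoneOn g (Set.Icc u v)) (hy : y ∈ Set.Icc u v) :
    g y ^ 2 ≤ g u ^ 2 + g v ^ 2 := by
  have huv : u ≤ v := hy.1.trans hy.2
  have hu : u ∈ Set.Icc u v := Set.left_mem_Icc.mpr huv
  have hv : v ∈ Set.Icc u v := Set.right_mem_Icc.mpr huv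
  rcases h with h | h
  · have h₁ := h hu hy hy.1
    have h₂ := h hy hv hy.2
    rcases le_total 0 (g y) with h₀ | h₀ <;> nlinarith [sq_nonneg (g u), sq_nonneg (g v)]
  · have h₁ := h hu hy hy.1
    have h₂ := h hy hv hy.2
    rcases le_total 0 (g y) with h₀ | h₀ <;> nlinarith [sq_nonneg (g u), sq_nonneg (g v)]

/-- Refined grid points stay within the coarse cell they subdivide. -/
lemma refined_node_mem_Icc {a b : ℝ} (hab : a ≤ b) {N τ : ℕ} (hτ : 0 < τ) (i : ℕ) {t : ℝ}
    (h₀ : 0 ≤ t) (h₁ : t ≤ τ) :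
    a + (τ * i + t) * ((b - a) / (τ * N)) ∈
      Set.Icc (a + i * ((b - a) / N)) (a + (i + 1) * ((b - a) / N)) := by
  have hτ' : (0 : ℝ) < τ := by exact_mod_cast hτ
  have hd : 0 ≤ (b - a) / N := div_nonneg (sub_nonneg.mpr hab) N.cast_nonneg
  have key : (τ * i + t) * ((b - a) / (τ * N)) = (i + t / τ) * ((b - a) / N) := by
    rw [mul_comm (τ : ℝ) N, ← div_div]
    field_simp
  rw [key]
  have ht₀ : 0 ≤ t / τ := by positivity
  have ht₁ : t / τ ≤ 1 := (div_le_one hτ').mpr h₁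
  constructor <;> gcongr
  linarith

/-- If `g` is monotonic (increasing or decreasing) on every training subinterval
`[x_i, x_{i+1}]`, then `‖g‖₁ ≤ √2 ‖g‖₀`. -/
theorem stmt1 (a b : ℝ) (hab : a < b) (N τ : ℕ) (hN : 1 ≤ N) (hτ : 1 < τ)
    (g : ℝ → ℝ)
    (hmono : ∀ i < N,
      MonotoneOn g (Set.Icc (a + i * ((b - a) / N)) (a + (i + 1) * ((b - a) / N))) ∨
      AntitoneOn g (Set.Icc (a + i * ((b - a) / N)) (a + (i + 1) * ((b - a) / N)))) :
    gridNorm a b (τ * N) g ≤ Real.sqrt 2 * gridNorm a b N g := by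
  have hτ' : (0 : ℝ) < τ := by exact_mod_cast zero_lt_one.trans hτ
  have hd : 0 ≤ (b - a) / N := div_nonneg (sub_nonneg.mpr hab.le) N.cast_nonneg
  unfold gridNorm
  rw [← Real.sqrt_mul zero_le_two]
  apply Real.sqrt_le_sqrt
  have hsum := sum_range_mul_le_of_block_le
    (fun j => g (a + j * ((b - a) / (τ * N))) ^ 2 + g (a + (j + 1) * ((b - a) / (τ * N))) ^ 2)
    (fun i => 2 * (g (a + i * ((b - a) / N)) ^ 2 + g (a + (i + 1) * ((b - a) / N)) ^ 2)) τ N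
    (fun i hi k hk => by
      have hk' : (k : ℝ) + 1 ≤ τ := by exact_mod_cast hk
      have h₁ := sq_le_sq_add_sq_of_monotoneOn_or_antitoneOn (hmono i hi)
        (refined_node_mem_Icc hab.le (zero_lt_one.trans hτ) i k.cast_nonneg (by linarith))
      have h₂ := sq_le_sq_add_sq_of_monotoneOn_or_antitoneOn (hmono i hi)
        (refined_node_mem_Icc hab.le (zero_lt_one.trans hτ) i (by positivity) hk')
      push_cast
      rw [add_assoc (τ * i : ℝ) k 1]
      linarith)
  rw [← Finset.mul_sum] at hsum
  push_cast
  have hstep : (b - a) / (τ * N) = (b - a) / N / τ := by rw [div_div, mul_comm (N : ℝ)]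
  calc _ ≤ (b - a) / (τ * N) / 2 * _ := mul_le_mul_of_nonneg_left hsum (by rw [hstep]; positivity)
    _ = _ := by
      rw [hstep]
      field_simp
end

section
/- Under the one-dimensional grid setup, let f, f_CK, f_NTK : [a,b] → ℝ and let 0 ≤ β < 1 be such that ‖f − f_NTK‖₀ ≤ ‖f − f_CK‖₀ ≤ (1/(1−β)) ‖f − f_NTK‖₀, and suppose that both residuals f − f_CK and f − f_NTK are monotonic on every subinterval [x_i, x_{i+1}] for 0 ≤ i ≤ N−1. Then (2τ)^{−1/2} ‖f − f_NTK‖₁ ≤ ‖f − f_CK‖₁ ≤ (√(2τ)/(1−β)) ‖f − f_NTK‖₁. -/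
open Finset in
/-- A sum over `τ * N` consecutive indices, split into `N` blocks of length `τ`. -/
theorem sum_range_mul_eq_sum_blocks (F : ℕ → ℝ) (τ N : ℕ) :
    ∑ j ∈ range (τ * N), F j = ∑ i ∈ range N, ∑ k ∈ range τ, F (τ * i + k) := by
  induction N with
  | zero => simp
  | succ n ih => rw [Nat.mul_succ, sum_range_add, ih, sum_range_succ]

open Finset in
/-- The squares of the endpoint samples of a block are dominated by the trapezoidal sum over it. -/
theorem sq_add_sq_le_sum_range (v : ℕ → ℝ) {τ : ℕ} (hτ : 1 ≤ τ) :
    v 0 ^ 2 + v τ ^ 2 ≤ ∑ k ∈ range τ, (v k ^ 2 + v (k + 1) ^ 2) := by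
  induction τ, hτ using Nat.le_induction with
  | base => simp
  | succ n _ ih =>
    rw [sum_range_succ]
    linarith [sq_nonneg (v n)]

open Finset in
theorem sum_coarse_le_sum_fine (u : ℕ → ℝ) {τ : ℕ} (hτ : 1 ≤ τ) (N : ℕ) :
    ∑ i ∈ range N, (u (τ * i) ^ 2 + u (τ * (i + 1)) ^ 2) ≤
      ∑ j ∈ range (τ * N), (u j ^ 2 + u (j + 1) ^ 2) := by
  rw [sum_range_mul_eq_sum_blocks]
  exact sum_le_sum fun i _ => sq_add_sq_le_sum_range (fun k => u (τ * i + k)) hτ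

open Finset in
theorem sum_fine_le_mul_sum_coarse (u : ℕ → ℝ) (τ N : ℕ)
    (hu : ∀ i < N, ∀ k ≤ τ, u (τ * i + k) ^ 2 ≤ u (τ * i) ^ 2 + u (τ * (i + 1)) ^ 2) :
    ∑ j ∈ range (τ * N), (u j ^ 2 + u (j + 1) ^ 2) ≤
      2 * τ * ∑ i ∈ range N, (u (τ * i) ^ 2 + u (τ * (i + 1)) ^ 2) := by
  rw [sum_range_mul_eq_sum_blocks, mul_sum]
  refine sum_le_sum fun i hi => ?_
  have hi := mem_range.mp hi
  calc ∑ k ∈ range τ, (u (τ * i + k) ^ 2 + u (τ * i + k + 1) ^ 2)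
      ≤ ∑ _k ∈ range τ, 2 * (u (τ * i) ^ 2 + u (τ * (i + 1)) ^ 2) := by
        refine sum_le_sum fun k hk => ?_
        have hk := mem_range.mp hk
        have h₁ := hu i hi k hk.le
        have h₂ := hu i hi (k + 1) hk
        rw [← add_assoc] at h₂
        linarith
    _ = 2 * τ * (u (τ * i) ^ 2 + u (τ * (i + 1)) ^ 2) := by
        rw [sum_const, card_range, nsmul_eq_mul]
        ring

/-- The coarse grid norm, written in terms of the samples on the refined grid. -/
theorem gridNorm_eq_sqrt_sum_refined (a b : ℝ) {N τ : ℕ} (hτ : 1 ≤ τ) (g : ℝ → ℝ) :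
    gridNorm a b N g = Real.sqrt (((b - a) / N / 2) * ∑ i ∈ Finset.range N,
      (g (a + (τ * i : ℕ) * ((b - a) / (τ * N : ℕ))) ^ 2 +
        g (a + (τ * (i + 1) : ℕ) * ((b - a) / (τ * N : ℕ))) ^ 2)) := by
  have hτ0 : (τ : ℝ) ≠ 0 := by positivity
  have key : ∀ c : ℝ, τ * c * ((b - a) / (τ * N)) = c * ((b - a) / N) := fun c => by
    rw [mul_comm (τ : ℝ) c, mul_assoc, ← mul_div_assoc, mul_div_mul_left _ _ hτ0]
  simp only [gridNorm, Nat.cast_mul, Nat.cast_add, Nat.cast_one, key]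

theorem gridNorm_eq_sqrt_sum_samples (a b : ℝ) (n : ℕ) (g : ℝ → ℝ) :
    gridNorm a b n g = Real.sqrt (((b - a) / n / 2) * ∑ j ∈ Finset.range n,
      (g (a + (j : ℕ) * ((b - a) / n)) ^ 2 + g (a + (j + 1 : ℕ) * ((b - a) / n)) ^ 2)) := by
  simp only [gridNorm, Nat.cast_add, Nat.cast_one]

theorem gridNorm_le_sqrt_mul_gridNorm_refined {a b : ℝ} (hab : a ≤ b) (N : ℕ) {τ : ℕ}
    (hτ : 1 ≤ τ) (g : ℝ → ℝ) :
    gridNorm a b N g ≤ Real.sqrt τ * gridNorm a b (τ * N) g := by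
  have hτ0 : (τ : ℝ) ≠ 0 := by positivity
  have hab' : 0 ≤ b - a := sub_nonneg.mpr hab
  rw [gridNorm_eq_sqrt_sum_refined a b hτ, gridNorm_eq_sqrt_sum_samples a b (τ * N),
    ← Real.sqrt_mul (Nat.cast_nonneg τ), ← mul_assoc]
  have hstep : (τ : ℝ) * ((b - a) / (τ * N : ℕ) / 2) = (b - a) / N / 2 := by
    rw [Nat.cast_mul, ← mul_div_assoc, ← mul_div_assoc, mul_div_mul_left _ _ hτ0]
  rw [hstep]
  exact Real.sqrt_le_sqrt (mul_le_mul_of_nonneg_left (sum_coarse_le_sum_fine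
    (fun j => g (a + (j : ℕ) * ((b - a) / (τ * N : ℕ)))) hτ N) (by positivity))

/-- On an interval where `g` is monotone or antitone, `g ^ 2` is at most the sum of its values at
the endpoints. -/
theorem sq_le_sq_add_sq_of_monotoneOn_or_antitoneOn_s6 {g : ℝ → ℝ} {x y z : ℝ}
    (hg : MonotoneOn g (Set.Icc x z) ∨ AntitoneOn g (Set.Icc x z)) (hxy : x ≤ y) (hyz : y ≤ z) :
    g y ^ 2 ≤ g x ^ 2 + g z ^ 2 := by
  have hx : x ∈ Set.Icc x z := ⟨le_rfl, hxy.trans hyz⟩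
  have hy : y ∈ Set.Icc x z := ⟨hxy, hyz⟩
  have hz : z ∈ Set.Icc x z := ⟨hxy.trans hyz, le_rfl⟩
  have aux : ∀ {p q r : ℝ}, p ≤ q → q ≤ r → q ^ 2 ≤ p ^ 2 + r ^ 2 := fun {p q r} hpq hqr => by
    rcases le_total 0 q with h | h <;> nlinarith [sq_nonneg p, sq_nonneg r]
  rcases hg with hg | hg
  · exact aux (hg hx hy hxy) (hg hy hz hyz)
  · rw [add_comm]
    exact aux (hg hy hz hyz) (hg hx hy hxy)

theorem gridNorm_refined_le_sqrt_two_mul_gridNorm {a b : ℝ} (hab : a ≤ b) (N : ℕ) {τ : ℕ}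
    (hτ : 1 ≤ τ) {g : ℝ → ℝ}
    (hg : ∀ i < N,
      MonotoneOn g (Set.Icc (a + i * ((b - a) / N)) (a + (i + 1) * ((b - a) / N))) ∨
      AntitoneOn g (Set.Icc (a + i * ((b - a) / N)) (a + (i + 1) * ((b - a) / N)))) :
    gridNorm a b (τ * N) g ≤ Real.sqrt 2 * gridNorm a b N g := by
  have hτ0 : (τ : ℝ) ≠ 0 := by positivity
  have hab' : 0 ≤ b - a := sub_nonneg.mpr hab
  set δ : ℝ := (b - a) / (τ * N : ℕ) with hδ
  have hδ0 : 0 ≤ δ := by positivity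
  have hstep : (b - a) / N = τ * δ := by
    rw [hδ, Nat.cast_mul, ← mul_div_assoc, mul_div_mul_left _ _ hτ0]
  rw [gridNorm_eq_sqrt_sum_samples a b (τ * N), gridNorm_eq_sqrt_sum_refined a b hτ,
    ← Real.sqrt_mul zero_le_two, ← hδ, hstep]
  refine Real.sqrt_le_sqrt ?_
  have hsum := sum_fine_le_mul_sum_coarse (fun j => g (a + (j : ℕ) * δ)) τ N fun i hi k hk => by
    have hk' : (k : ℝ) ≤ τ := by exact_mod_cast hk
    refine sq_le_sq_add_sq_of_monotoneOn_or_antitoneOn_s6 ?_ ?_ ?_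
    · convert hg i hi using 3 <;> rw [hstep] <;> push_cast <;> ring
    · push_cast
      nlinarith [mul_nonneg (Nat.cast_nonneg (α := ℝ) k) hδ0]
    · push_cast
      nlinarith [mul_le_mul_of_nonneg_right hk' hδ0]
  refine (mul_le_mul_of_nonneg_left hsum (by positivity : 0 ≤ δ / 2)).trans_eq ?_
  ring

/-- A training-grid comparison of two residuals, the first of them piecewise monotone, transfers to
the refined grid at the cost of a factor `√(2τ)`. -/
theorem gridNorm_refined_le_of_gridNorm_le {a b : ℝ} (hab : a ≤ b) (N : ℕ) {τ : ℕ}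
    (hτ : 1 ≤ τ) {g h : ℝ → ℝ} {c : ℝ} (hc : 0 ≤ c)
    (hg : ∀ i < N,
      MonotoneOn g (Set.Icc (a + i * ((b - a) / N)) (a + (i + 1) * ((b - a) / N))) ∨
      AntitoneOn g (Set.Icc (a + i * ((b - a) / N)) (a + (i + 1) * ((b - a) / N))))
    (hgh : gridNorm a b N g ≤ c * gridNorm a b N h) :
    gridNorm a b (τ * N) g ≤ Real.sqrt (2 * τ) * c * gridNorm a b (τ * N) h :=
  calc gridNorm a b (τ * N) g
      ≤ Real.sqrt 2 * gridNorm a b N g := gridNorm_refined_le_sqrt_two_mul_gridNorm hab N hτ hg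
    _ ≤ Real.sqrt 2 * (c * (Real.sqrt τ * gridNorm a b (τ * N) h)) := by
        gcongr
        refine hgh.trans ?_
        gcongr
        exact gridNorm_le_sqrt_mul_gridNorm_refined hab N hτ h
    _ = Real.sqrt (2 * τ) * c * gridNorm a b (τ * N) h := by
        rw [Real.sqrt_mul zero_le_two]
        ring

/-- Theorem 4.6 (monotone residuals): if the training-grid errors of the CK and NTK
approximants satisfy `‖f−f_NTK‖₀ ≤ ‖f−f_CK‖₀ ≤ (1/(1−β))‖f−f_NTK‖₀` and both residuals
are monotonic on every subinterval `[x_i, x_{i+1}]`, then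
`(2τ)^{−1/2} ‖f−f_NTK‖₁ ≤ ‖f−f_CK‖₁ ≤ (√(2τ)/(1−β)) ‖f−f_NTK‖₁`. -/
theorem stmt6 (a b : ℝ) (hab : a < b) (N τ : ℕ) (hN : 1 ≤ N) (hτ : 1 < τ)
    (f fCK fNTK : ℝ → ℝ) (β : ℝ) (hβ0 : 0 ≤ β) (hβ1 : β < 1)
    (htr1 : gridNorm a b N (f - fNTK) ≤ gridNorm a b N (f - fCK))
    (htr2 : gridNorm a b N (f - fCK) ≤ (1 / (1 - β)) * gridNorm a b N (f - fNTK))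
    (hmonoCK : ∀ i < N,
      MonotoneOn (f - fCK) (Set.Icc (a + i * ((b - a) / N)) (a + (i + 1) * ((b - a) / N))) ∨
      AntitoneOn (f - fCK) (Set.Icc (a + i * ((b - a) / N)) (a + (i + 1) * ((b - a) / N))))
    (hmonoNTK : ∀ i < N,
      MonotoneOn (f - fNTK) (Set.Icc (a + i * ((b - a) / N)) (a + (i + 1) * ((b - a) / N))) ∨
      AntitoneOn (f - fNTK) (Set.Icc (a + i * ((b - a) / N)) (a + (i + 1) * ((b - a) / N)))) :
    (Real.sqrt (2 * τ))⁻¹ * gridNorm a b (τ * N) (f - fNTK) ≤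
        gridNorm a b (τ * N) (f - fCK) ∧
      gridNorm a b (τ * N) (f - fCK) ≤
        (Real.sqrt (2 * τ) / (1 - β)) * gridNorm a b (τ * N) (f - fNTK) := by
  have hβ : 0 < 1 - β := sub_pos.mpr hβ1
  constructor
  · rw [inv_mul_le_iff₀ (by positivity)]
    simpa using gridNorm_refined_le_of_gridNorm_le hab.le N hτ.le zero_le_one hmonoNTK
      (by simpa using htr1)
  · rw [div_eq_mul_one_div]
    exact gridNorm_refined_le_of_gridNorm_le hab.le N hτ.le (by positivity) hmonoCK htr2
end

section
/- For all real numbers a and b, ln(1 + e^a) ≤ max{1, e^{a−b}} · ln(1 + e^b). -/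
/-- Logarithmic form of Bernoulli's inequality. -/
theorem log_one_add_mul_le_mul_log_one_add {ρ x : ℝ} (hρ : 1 ≤ ρ) (hx : 0 ≤ x) :
    Real.log (1 + ρ * x) ≤ ρ * Real.log (1 + x) := by
  rw [← Real.log_rpow (by positivity)]
  exact Real.log_le_log (by positivity) (one_add_mul_self_le_rpow_one_add (by linarith) hρ)

/-- For all real numbers `a` and `b`,
`ln(1 + e^a) ≤ max{1, e^{a−b}} · ln(1 + e^b)`. -/
theorem stmt10 (a b : ℝ) :
    Real.log (1 + Real.exp a) ≤ max 1 (Real.exp (a - b)) * Real.log (1 + Real.exp b) := by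
  have hexp : Real.exp a ≤ max 1 (Real.exp (a - b)) * Real.exp b :=
    calc Real.exp a = Real.exp (a - b) * Real.exp b := by rw [← Real.exp_add, sub_add_cancel]
      _ ≤ max 1 (Real.exp (a - b)) * Real.exp b := by gcongr; exact le_max_right _ _
  calc Real.log (1 + Real.exp a)
      ≤ Real.log (1 + max 1 (Real.exp (a - b)) * Real.exp b) :=
        Real.log_le_log (by positivity) (by linarith)
    _ ≤ max 1 (Real.exp (a - b)) * Real.log (1 + Real.exp b) :=
        log_one_add_mul_le_mul_log_one_add (le_max_left _ _) (Real.exp_pos b).le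
end
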